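/- For n ≥ 3 and negative reals a_1,…,a_n, let circ(a_1,…,a_n) be the symmetric n×n matrix with entries M_{i,i+1} = M_{i+1,i} = a_i (indices mod n, so M_{1,n} = M_{n,1} = a_n) and all other entries zero. If n ≡ 0 mod 4 and the product of the a_k with k even equals the product of the a_k with k odd, then circ(a_1,…,a_n) is degenerate with signature (n/2 - 1, n/2 - 1); otherwise it is nondegenerate with signature (n/2, n/2) if n is even, ((n-1)/2, (n+1)/2) if n ≡ 1 mod 4, and ((n+1)/2, (n-1)/2) if n ≡ 3 mod 4. -/

import Mathlib

/-!
Since `(M x)_{i+1} = a_i x_i + a_{i+1} x_{i+2}`, the equation `M x = 0` is a two-term recurrence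
with step two along the cycle. Two consecutive entries determine a solution, so the nullity is at
most 2. Going once around (twice if `n` is odd) multiplies an entry by a ratio of products of
weights; unless this ratio is 1, the solution vanishes. For negative weights the ratio has the sign
of `(-1)^(n/2)` if `n` is even, and is `-1` if `n` is odd, so degeneracy forces `4 ∣ n` and equality
of the two products.

Writing `Q(x) = xᵀ M x`, a subspace of codimension `k` on which `Q ≤ 0` bounds the number of
positive eigenvalues by `k`, and likewise for `Q ≥ 0` and negative eigenvalues. The test subspace
is given by the vanishing of the first `⌊n/2⌋` odd-indexed entries of `M x`. There `Q` is zero for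
even `n`, and for odd `n` it is the contribution of the last edge, of the sign of `(-1)^((n+1)/2)`
or zero; imposing `x_0 = 0` as well makes it vanish. Together with rank = #positive + #negative this
leaves a single possible signature. In the degenerate case the last of the odd-indexed equations
follows from the others, which lowers the codimension by one and matches nullity 2.
-/

/-- The cyclic weighted adjacency matrix of the `n`-cycle with edge weights
`a i` on the edge `{i, i+1}` (indices mod `n`). -/
def circMat (n : ℕ) [NeZero n] (a : Fin n → ℝ) : Matrix (Fin n) (Fin n) ℝ :=
  fun i j => if j = i + 1 then a i else if i = j + 1 then a j else 0

open Finset Matrix Module QuadraticMap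

section Inertia

variable {ι : Type*} [Fintype ι] [DecidableEq ι] {A : Matrix ι ι ℝ}

lemma toQuadraticForm'_apply {R : Type*} [CommRing R] (M : Matrix ι ι R) (x : ι → R) :
    M.toQuadraticForm' x = x ⬝ᵥ M *ᵥ x := by
  simp [toQuadraticForm', toLinearMap₂'_apply']

lemma toQuadraticForm'_equivalent_weightedSumSquares_eigenvalues (h : A.IsHermitian) :
    A.toQuadraticForm'.Equivalent (weightedSumSquares ℝ h.eigenvalues) := by
  let v : Basis ι ℝ (ι → ℝ) := h.eigenvectorBasis.toBasis.map (WithLp.linearEquiv 2 ℝ (ι → ℝ))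
  have v_apply (i : ι) : v i = (h.eigenvectorBasis i).ofLp := by simp [v]
  have mulVec_v (i : ι) : A *ᵥ v i = h.eigenvalues i • v i := by
    rw [v_apply, h.mulVec_eigenvectorBasis]
  have v_dotProduct (i j : ι) : v i ⬝ᵥ v j = if i = j then 1 else 0 := by
    rw [v_apply, v_apply, ← orthonormal_iff_ite.mp h.eigenvectorBasis.orthonormal i j,
      EuclideanSpace.inner_eq_star_dotProduct, star_trivial, dotProduct_comm]
  refine ⟨(isometryEquivBasisRepr _ v).trans ⟨.refl ℝ _, fun c => ?_⟩⟩
  simp [toQuadraticForm'_apply, mulVec_sum, mulVec_smul, mulVec_v, sum_dotProduct, dotProduct_sum,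
    v_dotProduct, mul_left_comm]

lemma card_eigenvalues_pos_le_finrank {F : Type*} [AddCommGroup F] [Module ℝ F]
    [FiniteDimensional ℝ F] (h : A.IsHermitian) (L : (ι → ℝ) →ₗ[ℝ] F)
    (hL : ∀ x, L x = 0 → x ⬝ᵥ A *ᵥ x ≤ 0) :
    Fintype.card {i // 0 < h.eigenvalues i} ≤ finrank ℝ F := by
  have sigPos_eq := QuadraticForm.sigPos_of_equiv_weightedSumSquares
    (toQuadraticForm'_equivalent_weightedSumSquares_eigenvalues h)
  have sigPos_add_le := QuadraticForm.sigPos_add_finrank_le_of_nonpos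
    (Q := A.toQuadraticForm') (V := LinearMap.ker L)
    fun x hx => (toQuadraticForm'_apply A x).trans_le (hL x hx)
  have rank_nullity := L.finrank_range_add_finrank_ker
  have range_le := (LinearMap.range L).finrank_le
  rw [← Nat.card_eq_fintype_card]
  change Set.ncard {i | 0 < h.eigenvalues i} ≤ _
  omega

lemma card_eigenvalues_neg_le_finrank {F : Type*} [AddCommGroup F] [Module ℝ F]
    [FiniteDimensional ℝ F] (h : A.IsHermitian) (L : (ι → ℝ) →ₗ[ℝ] F)
    (hL : ∀ x, L x = 0 → 0 ≤ x ⬝ᵥ A *ᵥ x) :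
    Fintype.card {i // h.eigenvalues i < 0} ≤ finrank ℝ F := by
  have sigNeg_eq := QuadraticForm.sigNeg_of_equiv_weightedSumSquares
    (toQuadraticForm'_equivalent_weightedSumSquares_eigenvalues h)
  have sigNeg_add_le := QuadraticForm.sigPos_add_finrank_le_of_nonpos
    (Q := -A.toQuadraticForm') (V := LinearMap.ker L)
    fun x hx => by simpa [toQuadraticForm'_apply] using hL x hx
  have rank_nullity := L.finrank_range_add_finrank_ker
  have range_le := (LinearMap.range L).finrank_le
  rw [sigPos_neg] at sigNeg_add_le
  rw [← Nat.card_eq_fintype_card]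
  change Set.ncard {i | h.eigenvalues i < 0} ≤ _
  omega

lemma card_eigenvalues_pos_add_card_eigenvalues_neg (h : A.IsHermitian) :
    Fintype.card {i // 0 < h.eigenvalues i} + Fintype.card {i // h.eigenvalues i < 0} =
      A.rank := by
  rw [h.rank_eq_card_non_zero_eigs, ← Fintype.card_subtype_or_disjoint]
  · exact Fintype.card_congr (Equiv.subtypeEquivRight fun i => by grind)
  · exact Pi.disjoint_iff.mpr fun i => by simpa [Prop.disjoint_iff] using fun hi => hi.le

lemma card_eigenvalues_pos_add_card_eigenvalues_neg_of_det_ne_zero (h : A.IsHermitian)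
    (hdet : A.det ≠ 0) :
    Fintype.card {i // 0 < h.eigenvalues i} + Fintype.card {i // h.eigenvalues i < 0} =
      Fintype.card ι := by
  rw [card_eigenvalues_pos_add_card_eigenvalues_neg,
    rank_of_isUnit _ ((isUnit_iff_isUnit_det A).mpr hdet.isUnit)]

end Inertia

lemma prod_range_add_one_eq {M : Type*} [CommMonoid M] {f : ℕ → M} {m : ℕ} (hf : f m = f 0) :
    ∏ i ∈ range m, f (i + 1) = ∏ i ∈ range m, f i := by
  cases m with
  | zero => rfl
  | succ m => rw [prod_range_succ, hf, prod_range_succ']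

lemma prod_range_two_mul_filter_mod_two_eq {M : Type*} [CommMonoid M] {m : ℕ} (f : ℕ → M) {r : ℕ}
    (hr : r < 2) : ∏ k ∈ range (2 * m) with k % 2 = r, f k = ∏ i ∈ range m, f (2 * i + r) := by
  rw [prod_filter]
  induction m with
  | zero => rfl
  | succ m ih =>
    rw [mul_add_one, prod_range_succ, prod_range_succ, ih, prod_range_succ]
    interval_cases r <;> simp [Nat.add_mod]

section Recurrence

variable {R : Type*} [CommRing R] {u v z : ℕ → R} {m : ℕ}

lemma prod_mul_eq_prod_neg_mul (h : ∀ i < m, u i * z i + v i * z (i + 1) = 0) :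
    (∏ i ∈ range m, v i) * z m = (∏ i ∈ range m, -u i) * z 0 := by
  induction m with
  | zero => simp
  | succ m ih =>
    rw [prod_range_succ, prod_range_succ]
    linear_combination (∏ i ∈ range m, v i) * h m m.lt_succ_self -
      u m * ih fun i hi => h i (hi.trans m.lt_succ_self)

lemma eq_zero_of_prod_ne_prod_neg [IsDomain R] (h : ∀ i < m, u i * z i + v i * z (i + 1) = 0)
    (hz : z m = z 0) (huv : ∏ i ∈ range m, v i ≠ ∏ i ∈ range m, -u i) : z 0 = 0 := by
  have hprod := prod_mul_eq_prod_neg_mul h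
  rw [hz] at hprod
  by_contra h0
  exact huv (mul_right_cancel₀ h0 hprod)

lemma last_eq_zero_of_prod_eq_prod_neg [IsDomain R] (hv : ∀ i, v i ≠ 0)
    (h : ∀ i < m, u i * z i + v i * z (i + 1) = 0) (hz : z (m + 1) = z 0)
    (huv : ∏ i ∈ range (m + 1), v i = ∏ i ∈ range (m + 1), -u i) :
    u m * z m + v m * z (m + 1) = 0 := by
  refine (mul_eq_zero.mp ?_).resolve_left (prod_ne_zero_iff.mpr fun i (_ : i ∈ range m) => hv i)
  rw [prod_range_succ, prod_range_succ] at huv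
  rw [hz]
  linear_combination u m * prod_mul_eq_prod_neg_mul h + z 0 * huv

lemma sum_range_two_mul_eq_zero {b y : ℕ → R}
    (h : ∀ i < m, b (2 * i) * y (2 * i) + b (2 * i + 1) * y (2 * i + 2) = 0) :
    ∑ k ∈ range (2 * m), b k * y k * y (k + 1) = 0 := by
  induction m with
  | zero => simp
  | succ m ih =>
    rw [mul_add_one, sum_range_succ, sum_range_succ, ih fun i hi => h i (hi.trans m.lt_succ_self)]
    linear_combination y (2 * m + 1) * h m m.lt_succ_self

section Order

variable [LinearOrder R] [IsStrictOrderedRing R]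

lemma prod_neg_pos (hu : ∀ i, u i < 0) (m : ℕ) : 0 < ∏ i ∈ range m, -u i :=
  prod_pos fun i _ => neg_pos.mpr (hu i)

lemma prod_ne_prod_neg_of_odd (hu : ∀ i, u i < 0) (hv : ∀ i, v i < 0) (hm : Odd m) :
    ∏ i ∈ range m, v i ≠ ∏ i ∈ range m, -u i := by
  have hu_pos := prod_neg_pos hu m
  have hv_pos := prod_neg_pos hv m
  rw [prod_neg, card_range, hm.neg_one_pow, neg_one_mul] at hv_pos
  exact ((neg_pos.mp hv_pos).trans hu_pos).ne

lemma neg_one_pow_mul_nonneg (hu : ∀ i, u i < 0) (hv : ∀ i, v i < 0)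
    (h : ∀ i < m, u i * z i + v i * z (i + 1) = 0) : 0 ≤ (-1) ^ m * (z m * z 0) := by
  refine nonneg_of_mul_nonneg_right ?_ (prod_neg_pos hv m)
  calc 0 ≤ (∏ i ∈ range m, -u i) * z 0 ^ 2 :=
        mul_nonneg (prod_neg_pos hu m).le (sq_nonneg _)
    _ = (∏ i ∈ range m, v i) * z m * z 0 := by rw [prod_mul_eq_prod_neg_mul h]; ring
    _ = ((-1) ^ m * (-1) ^ m) * ((∏ i ∈ range m, v i) * z m * z 0) := by
        rw [← mul_pow, neg_one_mul, neg_neg, one_pow, one_mul]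
    _ = (∏ i ∈ range m, -v i) * ((-1) ^ m * (z m * z 0)) := by
        rw [prod_neg, card_range]; ring

end Order

end Recurrence

/-- The `n`-periodic sequence `k ↦ x (k mod n)`: it turns cyclic indices into natural numbers, so
that sums and products over the cycle can be handled by induction. -/
def periodize {α : Type*} {n : ℕ} [NeZero n] (x : Fin n → α) (k : ℕ) : α := x (Fin.ofNat n k)

section Periodize

variable {α : Type*} {n : ℕ} [NeZero n] (x : Fin n → α)

lemma periodize_periodic : Function.Periodic (periodize x) n := fun k => by
  simp [periodize, Fin.ofNat]

lemma periodize_val (i : Fin n) : periodize x i = x i := by simp [periodize]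

lemma fin_ofNat_add_one (k : ℕ) : Fin.ofNat n (k + 1) = Fin.ofNat n k + 1 := by
  ext; simp [Fin.val_add]

lemma prod_filter_val_mod_two_eq {M : Type*} [CommMonoid M] {m : ℕ} [NeZero (2 * m)]
    (a : Fin (2 * m) → M) {r : ℕ} (hr : r < 2) :
    ∏ k : Fin (2 * m) with k.val % 2 = r, a k = ∏ i ∈ range m, periodize a (2 * i + r) := by
  rw [← prod_range_two_mul_filter_mod_two_eq _ hr, prod_filter, prod_filter, prod_range]
  simp only [periodize_val]

end Periodize

section CircMat

variable {n : ℕ} [NeZero n] {a x : Fin n → ℝ}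

lemma add_one_add_one_ne_self (hn : 3 ≤ n) (i : Fin n) : i + 1 + 1 ≠ i := by
  rw [add_assoc, Ne, add_eq_left, Fin.ext_iff, Fin.val_add]
  simp [Nat.mod_eq_of_lt (show 1 < n by omega), Nat.mod_eq_of_lt (show 2 < n by omega)]

lemma circMat_mulVec_add_one (hn : 3 ≤ n) (a x : Fin n → ℝ) (i : Fin n) :
    (circMat n a *ᵥ x) (i + 1) = a i * x i + a (i + 1) * x (i + 1 + 1) := by
  have summand_eq (j : Fin n) : circMat n a (i + 1) j * x j =
      (if j = i then a j * x j else 0) + if j = i + 1 + 1 then a (i + 1) * x j else 0 := by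
    have := add_one_add_one_ne_self hn i
    grind [circMat]
  simp [mulVec, dotProduct, summand_eq, sum_add_distrib]

lemma periodize_circMat_mulVec_add_one (hn : 3 ≤ n) (a x : Fin n → ℝ) (k : ℕ) :
    periodize (circMat n a *ᵥ x) (k + 1) = periodize a k * periodize x k +
      periodize a (k + 1) * periodize x (k + 2) := by
  simp only [periodize, fin_ofNat_add_one, circMat_mulVec_add_one hn]

lemma dotProduct_circMat_mulVec (hn : 3 ≤ n) (a x : Fin n → ℝ) :
    x ⬝ᵥ circMat n a *ᵥ x =
      2 * ∑ k ∈ range n, periodize a k * periodize x k * periodize x (k + 1) := by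
  have sum_eq : ∑ k ∈ range n, periodize a k * periodize x k * periodize x (k + 1) =
      ∑ i, a i * x i * x (i + 1) := by
    simp only [sum_range, periodize, fin_ofNat_add_one, Fin.ofNat_val_eq_self]
  have sum_shift := Equiv.sum_comp (Equiv.addRight (1 : Fin n)) fun i => a i * x i * x (i + 1)
  calc x ⬝ᵥ circMat n a *ᵥ x
      = ∑ i, x (i + 1) * (circMat n a *ᵥ x) (i + 1) :=
        (Equiv.sum_comp (Equiv.addRight (1 : Fin n)) fun i => x i * (circMat n a *ᵥ x) i).symm
    _ = ∑ i, a i * x i * x (i + 1) + ∑ i, a (i + 1) * x (i + 1) * x (i + 1 + 1) := by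
        rw [← sum_add_distrib]
        exact sum_congr rfl fun i _ => by rw [circMat_mulVec_add_one hn]; ring
    _ = 2 * ∑ k ∈ range n, periodize a k * periodize x k * periodize x (k + 1) := by
        rw [sum_eq, two_mul]; exact congrArg _ sum_shift

/-- The linear map sending `x` to the entries of `circMat n a *ᵥ x` at the first `k` odd indices
(mod `n`). Its kernel is the orthogonal complement, for the form of `circMat n a`, of the span of
the corresponding basis vectors. -/
noncomputable def oddRows (n : ℕ) [NeZero n] (a : Fin n → ℝ) (k : ℕ) :
    (Fin n → ℝ) →ₗ[ℝ] (Fin k → ℝ) :=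
  LinearMap.funLeft ℝ ℝ (fun i => Fin.ofNat n (2 * i + 1)) ∘ₗ (circMat n a).mulVecLin

lemma oddRows_eq_zero (hn : 3 ≤ n) {k : ℕ} (hx : oddRows n a k x = 0) :
    ∀ i < k, periodize a (2 * i) * periodize x (2 * i) +
      periodize a (2 * i + 1) * periodize x (2 * i + 2) = 0 := fun i hi =>
  (periodize_circMat_mulVec_add_one hn a x (2 * i)).symm.trans (congrFun hx ⟨i, hi⟩)

lemma eq_zero_of_circMat_mulVec_eq_zero (hn : 3 ≤ n) (ha : ∀ i, a i ≠ 0)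
    (hx : circMat n a *ᵥ x = 0) (h0 : periodize x 0 = 0) (h1 : periodize x 1 = 0) : x = 0 := by
  have consecutive_eq_zero (k : ℕ) : periodize x k = 0 ∧ periodize x (k + 1) = 0 := by
    induction k with
    | zero => exact ⟨h0, h1⟩
    | succ k ih =>
      have hk := periodize_circMat_mulVec_add_one hn a x k
      rw [hx, ih.1, mul_zero, zero_add] at hk
      exact ⟨ih.2, (mul_eq_zero.mp hk.symm).resolve_left (ha _)⟩
  ext i
  rw [← periodize_val x i, (consecutive_eq_zero i).1, Pi.zero_apply]

lemma le_rank_circMat_add_two (hn : 3 ≤ n) (ha : ∀ i, a i ≠ 0) : n ≤ (circMat n a).rank + 2 := by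
  let initial : (Fin n → ℝ) →ₗ[ℝ] ℝ × ℝ := (LinearMap.proj 0).prod (LinearMap.proj (Fin.ofNat n 1))
  have initial_injective :
      Function.Injective (initial.domRestrict (LinearMap.ker (circMat n a).mulVecLin)) := by
    rw [← LinearMap.ker_eq_bot, LinearMap.ker_eq_bot']
    rintro ⟨x, hx⟩ hinit
    exact Subtype.ext (eq_zero_of_circMat_mulVec_eq_zero hn ha hx
      (congrArg Prod.fst hinit) (congrArg Prod.snd hinit))
  have nullity_le := LinearMap.finrank_le_finrank_of_injective initial_injective
  have rank_nullity := (circMat n a).mulVecLin.finrank_range_add_finrank_ker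
  rw [finrank_prod, finrank_self] at nullity_le
  rw [finrank_fin_fun] at rank_nullity
  rw [Matrix.rank]
  omega

lemma det_circMat_ne_zero_of_prod_ne (hn : 3 ≤ n) (ha : ∀ i, a i ≠ 0) {m : ℕ} (hm : n ∣ 2 * m)
    (hprod : ∏ i ∈ range m, periodize a (2 * i + 1) ≠ ∏ i ∈ range m, -periodize a (2 * i)) :
    (circMat n a).det ≠ 0 := by
  intro hdet
  obtain ⟨x, hx_ne, hx⟩ := exists_mulVec_eq_zero_iff.mpr hdet
  have recurrence (k : ℕ) : periodize a k * periodize x k +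
      periodize a (k + 1) * periodize x (k + 2) = 0 := by
    rw [← periodize_circMat_mulVec_add_one hn, hx]; rfl
  have periodic {y : Fin n → ℝ} : Function.Periodic (periodize y) (2 * m) := by
    obtain ⟨c, hc⟩ := hm
    rw [hc, mul_comm]
    exact (periodize_periodic y).nsmul c
  refine hx_ne (eq_zero_of_circMat_mulVec_eq_zero hn ha hx ?_ ?_)
  · exact eq_zero_of_prod_ne_prod_neg (z := fun i => periodize x (2 * i))
      (fun i _ => recurrence (2 * i)) periodic.eq hprod
  · refine eq_zero_of_prod_ne_prod_neg (z := fun i => periodize x (2 * i + 1))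
      (fun i _ => recurrence (2 * i + 1)) ((congrArg _ (add_comm _ 1)).trans (periodic 1)) ?_
    contrapose! hprod
    have prod_even_shift := prod_range_add_one_eq (f := fun i => periodize a (2 * i)) periodic.eq
    calc ∏ i ∈ range m, periodize a (2 * i + 1)
        = (-1) ^ m * ∏ i ∈ range m, -periodize a (2 * i + 1) := by
          simp [prod_neg, ← mul_assoc, ← mul_pow]
      _ = (-1) ^ m * ∏ i ∈ range m, periodize a (2 * i) := by rw [← hprod, ← prod_even_shift]; rfl
      _ = ∏ i ∈ range m, -periodize a (2 * i) := by rw [prod_neg, card_range]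

lemma dotProduct_circMat_two_mul_eq_zero {m : ℕ} [NeZero (2 * m)] (hm : 3 ≤ 2 * m)
    {a x : Fin (2 * m) → ℝ} (hx : oddRows (2 * m) a m x = 0) :
    x ⬝ᵥ circMat (2 * m) a *ᵥ x = 0 := by
  rw [dotProduct_circMat_mulVec hm, sum_range_two_mul_eq_zero (oddRows_eq_zero hm hx), mul_zero]

lemma dotProduct_circMat_two_mul_eq_zero_of_prod_eq {m : ℕ} [NeZero (2 * (m + 1))]
    (hm : 3 ≤ 2 * (m + 1)) {a x : Fin (2 * (m + 1)) → ℝ} (ha : ∀ i, a i ≠ 0)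
    (hprod : ∏ i ∈ range (m + 1), periodize a (2 * i + 1) =
      ∏ i ∈ range (m + 1), -periodize a (2 * i))
    (hx : oddRows (2 * (m + 1)) a m x = 0) : x ⬝ᵥ circMat (2 * (m + 1)) a *ᵥ x = 0 := by
  have recurrence := oddRows_eq_zero hm hx
  have recurrence_last := last_eq_zero_of_prod_eq_prod_neg (z := fun i => periodize x (2 * i))
    (fun _ => ha _) recurrence (periodize_periodic x).eq hprod
  rw [dotProduct_circMat_mulVec hm, sum_range_two_mul_eq_zero, mul_zero]
  intro i hi
  rcases Nat.lt_succ_iff_lt_or_eq.mp hi with hi | rfl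
  exacts [recurrence i hi, recurrence_last]

lemma dotProduct_circMat_two_mul_add_one {m : ℕ} (hm : 3 ≤ 2 * m + 1)
    {a x : Fin (2 * m + 1) → ℝ} (hx : oddRows (2 * m + 1) a m x = 0) :
    x ⬝ᵥ circMat (2 * m + 1) a *ᵥ x =
      2 * (periodize a (2 * m) * (periodize x (2 * m) * periodize x 0)) := by
  rw [dotProduct_circMat_mulVec hm, sum_range_succ,
    sum_range_two_mul_eq_zero (oddRows_eq_zero hm hx), (periodize_periodic x).eq]
  ring

lemma neg_one_pow_mul_dotProduct_circMat_nonpos {m : ℕ} (hm : 3 ≤ 2 * m + 1)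
    {a x : Fin (2 * m + 1) → ℝ} (ha : ∀ i, a i < 0) (hx : oddRows (2 * m + 1) a m x = 0) :
    (-1) ^ m * (x ⬝ᵥ circMat (2 * m + 1) a *ᵥ x) ≤ 0 := by
  have hsign := neg_one_pow_mul_nonneg (z := fun i => periodize x (2 * i)) (fun _ => ha _)
    (fun _ => ha _) (oddRows_eq_zero hm hx)
  calc (-1) ^ m * (x ⬝ᵥ circMat (2 * m + 1) a *ᵥ x)
      = 2 * periodize a (2 * m) * ((-1) ^ m * (periodize x (2 * m) * periodize x 0)) := by
        rw [dotProduct_circMat_two_mul_add_one hm hx]; ring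
    _ ≤ 0 := mul_nonpos_of_nonpos_of_nonneg
        (mul_nonpos_of_nonneg_of_nonpos zero_le_two (ha _).le) hsign

lemma card_eigenvalues_circMat_of_prod_eq {m : ℕ} [NeZero (2 * m)] (hm : 3 ≤ 2 * m)
    {a : Fin (2 * m) → ℝ} (ha : ∀ i, a i ≠ 0)
    (hprod : ∏ i ∈ range m, periodize a (2 * i + 1) = ∏ i ∈ range m, -periodize a (2 * i))
    (h : (circMat (2 * m) a).IsHermitian) :
    (circMat (2 * m) a).det = 0 ∧ Fintype.card {i // 0 < h.eigenvalues i} = m - 1 ∧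
      Fintype.card {i // h.eigenvalues i < 0} = m - 1 := by
  obtain ⟨m, rfl⟩ : ∃ k, m = k + 1 := ⟨m - 1, by omega⟩
  have isotropic (x) := dotProduct_circMat_two_mul_eq_zero_of_prod_eq (x := x) hm ha hprod
  have pos_le := card_eigenvalues_pos_le_finrank h _ fun x hx => (isotropic x hx).le
  have neg_le := card_eigenvalues_neg_le_finrank h _ fun x hx => (isotropic x hx).ge
  have pos_add_neg := card_eigenvalues_pos_add_card_eigenvalues_neg h
  have le_rank := le_rank_circMat_add_two hm ha
  rw [finrank_fin_fun] at pos_le neg_le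
  refine ⟨?_, by omega, by omega⟩
  by_contra hdet
  have pos_add_neg_eq := card_eigenvalues_pos_add_card_eigenvalues_neg_of_det_ne_zero h hdet
  rw [Fintype.card_fin] at pos_add_neg_eq
  omega

lemma card_eigenvalues_circMat_two_mul {m : ℕ} [NeZero (2 * m)] (hm : 3 ≤ 2 * m)
    {a : Fin (2 * m) → ℝ} (hdet : (circMat (2 * m) a).det ≠ 0)
    (h : (circMat (2 * m) a).IsHermitian) :
    Fintype.card {i // 0 < h.eigenvalues i} = m ∧
      Fintype.card {i // h.eigenvalues i < 0} = m := by
  have isotropic (x) := dotProduct_circMat_two_mul_eq_zero (a := a) (x := x) hm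
  have pos_le := card_eigenvalues_pos_le_finrank h _ fun x hx => (isotropic x hx).le
  have neg_le := card_eigenvalues_neg_le_finrank h _ fun x hx => (isotropic x hx).ge
  have pos_add_neg := card_eigenvalues_pos_add_card_eigenvalues_neg_of_det_ne_zero h hdet
  rw [finrank_fin_fun] at pos_le neg_le
  rw [Fintype.card_fin] at pos_add_neg
  omega

lemma card_eigenvalues_circMat_two_mul_add_one {m : ℕ} (hm : 3 ≤ 2 * m + 1)
    {a : Fin (2 * m + 1) → ℝ} (ha : ∀ i, a i < 0) (hdet : (circMat (2 * m + 1) a).det ≠ 0)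
    (h : (circMat (2 * m + 1) a).IsHermitian) :
    (Even m → Fintype.card {i // 0 < h.eigenvalues i} = m ∧
      Fintype.card {i // h.eigenvalues i < 0} = m + 1) ∧
    (Odd m → Fintype.card {i // 0 < h.eigenvalues i} = m + 1 ∧
      Fintype.card {i // h.eigenvalues i < 0} = m) := by
  have semidefinite (x) := neg_one_pow_mul_dotProduct_circMat_nonpos (x := x) hm ha
  let L := (oddRows (2 * m + 1) a m).prod (LinearMap.proj 0 : (Fin (2 * m + 1) → ℝ) →ₗ[ℝ] ℝ)
  have isotropic (x) (hx : L x = 0) : x ⬝ᵥ circMat (2 * m + 1) a *ᵥ x = 0 := by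
    obtain ⟨hodd, h0⟩ := Prod.ext_iff.mp hx
    rw [dotProduct_circMat_two_mul_add_one hm hodd, show periodize x 0 = 0 from h0]
    ring
  have pos_le := card_eigenvalues_pos_le_finrank h L fun x hx => (isotropic x hx).le
  have neg_le := card_eigenvalues_neg_le_finrank h L fun x hx => (isotropic x hx).ge
  have pos_add_neg := card_eigenvalues_pos_add_card_eigenvalues_neg_of_det_ne_zero h hdet
  rw [finrank_prod, finrank_fin_fun, finrank_self] at pos_le neg_le
  rw [Fintype.card_fin] at pos_add_neg
  constructor <;> intro hpar
  · have pos_le' := card_eigenvalues_pos_le_finrank h (oddRows _ a m) fun x hx => by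
      simpa [hpar.neg_one_pow] using semidefinite x hx
    rw [finrank_fin_fun] at pos_le'
    omega
  · have neg_le' := card_eigenvalues_neg_le_finrank h (oddRows _ a m) fun x hx => by
      simpa [hpar.neg_one_pow] using semidefinite x hx
    rw [finrank_fin_fun] at neg_le'
    omega

lemma prod_odd_eq_prod_neg_even_iff_of_even {m : ℕ} [NeZero (2 * m)] (hm : Even m)
    (a : Fin (2 * m) → ℝ) :
    ∏ i ∈ range m, periodize a (2 * i + 1) = ∏ i ∈ range m, -periodize a (2 * i) ↔
      ∏ k : Fin (2 * m) with k.val % 2 = 0, a k = ∏ k : Fin (2 * m) with k.val % 2 = 1, a k := by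
  rw [prod_filter_val_mod_two_eq a zero_lt_two, prod_filter_val_mod_two_eq a one_lt_two, prod_neg,
    card_range, hm.neg_one_pow, one_mul]
  exact eq_comm

lemma det_circMat_ne_zero_of_odd (hn : 3 ≤ n) (ha : ∀ i, a i < 0) (hodd : Odd n) :
    (circMat n a).det ≠ 0 :=
  det_circMat_ne_zero_of_prod_ne hn (fun i => (ha i).ne) (dvd_mul_left n 2)
    (prod_ne_prod_neg_of_odd (fun _ => ha _) (fun _ => ha _) hodd)

lemma det_circMat_two_mul_ne_zero {m : ℕ} [NeZero (2 * m)] (hm : 3 ≤ 2 * m)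
    {a : Fin (2 * m) → ℝ} (ha : ∀ i, a i < 0)
    (hprod : Even m →
      ∏ k : Fin (2 * m) with k.val % 2 = 0, a k ≠ ∏ k : Fin (2 * m) with k.val % 2 = 1, a k) :
    (circMat (2 * m) a).det ≠ 0 := by
  refine det_circMat_ne_zero_of_prod_ne hm (fun i => (ha i).ne) dvd_rfl ?_
  rcases m.even_or_odd with heven | hodd
  · exact (prod_odd_eq_prod_neg_even_iff_of_even heven a).not.mpr (hprod heven)
  · exact prod_ne_prod_neg_of_odd (fun _ => ha _) (fun _ => ha _) hodd

end CircMat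

/-- Signature of the cyclic matrix `circ(a_1,…,a_n)` with negative weights: it is
degenerate of signature `(n/2 - 1, n/2 - 1)` exactly when `n ≡ 0 [4]` and the even
and odd products of the weights agree; otherwise it is nondegenerate, of signature
`(n/2, n/2)` for even `n`, `((n-1)/2, (n+1)/2)` for `n ≡ 1 [4]` and
`((n+1)/2, (n-1)/2)` for `n ≡ 3 [4]`. -/
theorem circ_signature (n : ℕ) [NeZero n] (hn : 3 ≤ n) (a : Fin n → ℝ)
    (ha : ∀ i, a i < 0) (h : (circMat n a).IsHermitian) :
    (((n % 4 = 0) ∧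
        ∏ k ∈ Finset.univ.filter (fun k : Fin n => (k : ℕ) % 2 = 0), a k =
          ∏ k ∈ Finset.univ.filter (fun k : Fin n => (k : ℕ) % 2 = 1), a k) →
      ((circMat n a).det = 0 ∧
        Fintype.card {i // 0 < h.eigenvalues i} = n / 2 - 1 ∧
        Fintype.card {i // h.eigenvalues i < 0} = n / 2 - 1)) ∧
    ((¬ ((n % 4 = 0) ∧
        ∏ k ∈ Finset.univ.filter (fun k : Fin n => (k : ℕ) % 2 = 0), a k =
          ∏ k ∈ Finset.univ.filter (fun k : Fin n => (k : ℕ) % 2 = 1), a k)) →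
      ((circMat n a).det ≠ 0 ∧
        (n % 2 = 0 →
          Fintype.card {i // 0 < h.eigenvalues i} = n / 2 ∧
          Fintype.card {i // h.eigenvalues i < 0} = n / 2) ∧
        (n % 4 = 1 →
          Fintype.card {i // 0 < h.eigenvalues i} = (n - 1) / 2 ∧
          Fintype.card {i // h.eigenvalues i < 0} = (n + 1) / 2) ∧
        (n % 4 = 3 →
          Fintype.card {i // 0 < h.eigenvalues i} = (n + 1) / 2 ∧
          Fintype.card {i // h.eigenvalues i < 0} = (n - 1) / 2))) := by
  obtain ⟨m, rfl | rfl⟩ := n.even_or_odd'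
  · have hparity : 2 * m % 4 = 0 ↔ Even m := by rw [Nat.even_iff]; omega
    refine ⟨fun ⟨hmod, hprod⟩ => ?_, fun hne => ?_⟩
    · rw [Nat.mul_div_cancel_left m two_pos]
      exact card_eigenvalues_circMat_of_prod_eq hn (fun i => (ha i).ne)
        ((prod_odd_eq_prod_neg_even_iff_of_even (hparity.mp hmod) a).mpr hprod) h
    · have hdet := det_circMat_two_mul_ne_zero hn ha fun hm hprod => hne ⟨hparity.mpr hm, hprod⟩
      have hcard := card_eigenvalues_circMat_two_mul hn hdet h
      refine ⟨hdet, ?_, ?_, ?_⟩ <;> omega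
  · have hdet := det_circMat_ne_zero_of_odd hn ha (odd_two_mul_add_one m)
    have ⟨heven, hodd⟩ := card_eigenvalues_circMat_two_mul_add_one hn ha hdet h
    rw [Nat.even_iff] at heven
    rw [Nat.odd_iff] at hodd
    refine ⟨?_, fun _ => ⟨hdet, ?_, ?_, ?_⟩⟩ <;> omega
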